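/- Let S be a G-nilpotent (resp. G-solvable) factorizable inverse monoid with zero, with group of units G, of G-nilpotent length n (resp. G-solvable length n), whose natural connection θ is a dual isomorphism from the semilattice of idempotents onto a sublattice of L(G). Then every subgroup of S (in particular every maximal subgroup H_e = {x ∈ S : x x⁻¹ = x⁻¹ x = e}) is a nilpotent group of nilpotency class at most n (resp. a solvable group of derived length at most n). -/

import Mathlib

/-- An inverse monoid: a monoid in which every element `a` has an inverse `a⁻¹`
satisfying `a * a⁻¹ * a = a` and `a⁻¹ * a * a⁻¹ = a⁻¹`, and this inverse is unique. -/
class InverseMonoid (S : Type*) extends Monoid S, Inv S where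
  mul_inv_mul : ∀ a : S, a * a⁻¹ * a = a
  inv_mul_inv : ∀ a : S, a⁻¹ * a * a⁻¹ = a⁻¹
  inv_unique : ∀ a b : S, a * b * a = a → b * a * b = b → b = a⁻¹

/-- An inverse monoid with a (two-sided absorbing) zero element. -/
class InverseMonoidWithZero (S : Type*) extends InverseMonoid S, Zero S where
  zero_mul : ∀ a : S, 0 * a = 0
  mul_zero : ∀ a : S, a * 0 = 0

/-- The natural partial order on an inverse monoid: `a ≤ b` iff `a = e * b`
for some idempotent `e`. -/
def NatLe {S : Type*} [Monoid S] (a b : S) : Prop :=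
  ∃ e : S, IsIdempotentElem e ∧ a = e * b

/-- The filter `e↑ = {s | e ≤ s}` generated by `e`. -/
def upfilter {S : Type*} [Monoid S] (e : S) : Set S := {s | NatLe e s}

/-- `c` is central in (a subset) `T`: it belongs to `T` and commutes with all elements of `T`. -/
def CentralIn {S : Type*} [Mul S] (T : Set S) (c : S) : Prop :=
  c ∈ T ∧ ∀ s ∈ T, c * s = s * c

/-- A monoid is factorizable if every element is a product of an idempotent and a unit. -/
def Factorizable (S : Type*) [Monoid S] : Prop :=
  ∀ s : S, ∃ e g : S, IsIdempotentElem e ∧ IsUnit g ∧ s = e * g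

/-- The natural connection `θ`: for an (idempotent) `e`, the subgroup
`eθ = {g ∈ G : e * g = e}` of the group of units. -/
def natconn {S : Type*} [Monoid S] (e : S) : Subgroup Sˣ where
  carrier := {g : Sˣ | e * (g : S) = e}
  one_mem' := by simp
  mul_mem' := by
    intro a b ha hb
    simp only [Set.mem_setOf_eq, Units.val_mul] at *
    rw [← mul_assoc, ha, hb]
  inv_mem' := by
    intro a ha
    simp only [Set.mem_setOf_eq] at *
    nth_rewrite 1 [← ha]
    rw [mul_assoc, ← Units.val_mul, mul_inv_cancel, Units.val_one, mul_one]

/-- The natural connection is a dual isomorphism from the idempotents onto a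
sublattice of the lattice of subgroups of the group of units: it is injective on
idempotents, order-reversing in both directions, and its image is closed under
joins and meets of subgroups. -/
def NatconnDualIso (S : Type*) [Monoid S] : Prop :=
  (∀ e f : S, IsIdempotentElem e → IsIdempotentElem f → natconn e = natconn f → e = f) ∧
  (∀ e f : S, IsIdempotentElem e → IsIdempotentElem f →
    (NatLe e f ↔ natconn f ≤ natconn e)) ∧
  (∀ e f : S, IsIdempotentElem e → IsIdempotentElem f →
    (∃ h : S, IsIdempotentElem h ∧ natconn h = natconn e ⊔ natconn f) ∧
    (∃ h : S, IsIdempotentElem h ∧ natconn h = natconn e ⊓ natconn f))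

/-- `j` is the join (least upper bound) of `e` and `f` with respect to the natural order. -/
def IsNatJoin {S : Type*} [Monoid S] (e f j : S) : Prop :=
  NatLe e j ∧ NatLe f j ∧ ∀ x : S, NatLe e x → NatLe f x → NatLe j x

/-- `F_{e,f} = f · e↑`. -/
def Fef {S : Type*} [Monoid S] (e f : S) : Set S := (f * ·) '' upfilter e

/-- `UF_{e,f}`: the group of units of the monoid `F_{e,f}` (whose identity is `f`). -/
def UFef {S : Type*} [Monoid S] (e f : S) : Set S :=
  {x ∈ Fef e f | ∃ y ∈ Fef e f, x * y = f ∧ y * x = f}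

/-- The centre of a subset `T`. -/
def ZIn {S : Type*} [Mul S] (T : Set S) : Set S := {x ∈ T | ∀ y ∈ T, x * y = y * x}

/-- Two subsets are isomorphic as semigroups (with the induced multiplication). -/
def SubIso {S : Type*} [Mul S] (A B : Set S) : Prop :=
  ∃ φ : S → S, Set.BijOn φ A B ∧ ∀ a ∈ A, ∀ b ∈ A, φ (a * b) = φ a * φ b

/-- A subcentral idempotent series between `0` and `a`. -/
def IsSubcentralSeriesBetween {S : Type*} [Monoid S] [Zero S] (n : ℕ) (c : ℕ → S) (a : S) :
    Prop :=
  c 0 = 0 ∧ c n = a ∧ (∀ i ≤ n, IsIdempotentElem (c i)) ∧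
    ∀ i < n, CentralIn (upfilter (c i)) (c (i + 1))

/-- A subcentral idempotent series of `S` (between `0` and `1`). -/
def IsSubcentralSeries {S : Type*} [Monoid S] [Zero S] (n : ℕ) (c : ℕ → S) : Prop :=
  IsSubcentralSeriesBetween n c 1

/-- A central idempotent series of `S`. -/
def IsCentralSeries {S : Type*} [Monoid S] [Zero S] (n : ℕ) (c : ℕ → S) : Prop :=
  c 0 = 0 ∧ c n = 1 ∧ (∀ i ≤ n, IsIdempotentElem (c i)) ∧
    (∀ i < n, NatLe (c i) (c (i + 1))) ∧
    ∀ i < n, CentralIn Set.univ (c (i + 1))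

/-- A subcentral idempotent: one occurring in some subcentral idempotent series of `S`. -/
def IsSubcentralIdem {S : Type*} [Monoid S] [Zero S] (e : S) : Prop :=
  ∃ (n : ℕ) (c : ℕ → S), IsSubcentralSeries n c ∧ ∃ i ≤ n, c i = e

/-- A `G`-nilpotent series: a chain of central idempotents from `0` to `1` with
`F_{eᵢ,eᵢ₊₁} ⊆ Z(F_{0,eᵢ₊₁})`. -/
def GNilpotentSeries {S : Type*} [Monoid S] [Zero S] (n : ℕ) (c : ℕ → S) : Prop :=
  c 0 = 0 ∧ c n = 1 ∧ (∀ i ≤ n, IsIdempotentElem (c i) ∧ CentralIn Set.univ (c i)) ∧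
    (∀ i < n, NatLe (c i) (c (i + 1))) ∧
    ∀ i < n, Fef (c i) (c (i + 1)) ⊆ ZIn (Fef 0 (c (i + 1)))

/-- A `G`-solvable series: a chain of central idempotents from `0` to `1` with
each `F_{eᵢ,eᵢ₊₁}` commutative. -/
def GSolvableSeries {S : Type*} [Monoid S] [Zero S] (n : ℕ) (c : ℕ → S) : Prop :=
  c 0 = 0 ∧ c n = 1 ∧ (∀ i ≤ n, IsIdempotentElem (c i) ∧ CentralIn Set.univ (c i)) ∧
    (∀ i < n, NatLe (c i) (c (i + 1))) ∧
    ∀ i < n, ∀ x ∈ Fef (c i) (c (i + 1)), ∀ y ∈ Fef (c i) (c (i + 1)), x * y = y * x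

/-- `S` is `G`-nilpotent. -/
def GNilpotent (S : Type*) [Monoid S] [Zero S] : Prop :=
  ∃ (n : ℕ) (c : ℕ → S), GNilpotentSeries n c

/-- `S` is `G`-solvable. -/
def GSolvable (S : Type*) [Monoid S] [Zero S] : Prop :=
  ∃ (n : ℕ) (c : ℕ → S), GSolvableSeries n c

/-- Two idempotent series are isomorphic: same length, and a one-to-one correspondence
between their factors under which corresponding factors are isomorphic. -/
def SeriesIso {S : Type*} [Monoid S] (n : ℕ) (c : ℕ → S) (n' : ℕ) (d : ℕ → S) : Prop :=
  n = n' ∧ ∃ σ : ℕ → ℕ, Set.BijOn σ {i | i < n} {i | i < n'} ∧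
    ∀ i < n, SubIso (Fef (c i) (c (i + 1))) (Fef (d (σ i)) (d (σ i + 1)))

/-- A composition series (for a kind `P` of series): it has no repeated terms, and any
refinement of it (of the same kind) only repeats its terms. -/
def IsCompositionOf {S : Type*} (P : ℕ → (ℕ → S) → Prop) (n : ℕ) (c : ℕ → S) : Prop :=
  P n c ∧ (∀ i ≤ n, ∀ j ≤ n, c i = c j → i = j) ∧
    ∀ (m : ℕ) (d : ℕ → S), P m d → (∀ i ≤ n, ∃ j ≤ m, d j = c i) →
      ∀ j ≤ m, ∃ i ≤ n, d j = c i

/-!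
Let `G` be the group of units. For a central idempotent `f`, two elements `f * g` and `f * h` with
`g, h ∈ G` commute exactly when `⁅g, h⁆` lies in `natconn f`. Applied to the factors of a
`G`-nilpotent (resp. `G`-solvable) series `0 = e₀ ≤ ⋯ ≤ eₙ = 1`, this says that the subgroups
`natconn eᵢ`, which descend from `natconn 0 = G` to `natconn 1 = 1`, contain the lower central
(resp. derived) series of `G`.

A subgroup of `S` with identity `e` embeds in the group of units of `e * S * e`. Factorizability
writes every such unit as `e * g` with `g ∈ G` commuting with `e`, so this group is a homomorphic
image of the centralizer of `e` in `G`, and every subgroup of `S` is a subquotient of `G`.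
-/

section Subquotients

variable {G K : Type*} [Group G] [Group K] {f : G →* K} {n : ℕ}

theorem lowerCentralSeries_eq_bot_of_injective (hf : Function.Injective f)
    (hK : (⊤ : Subgroup K).lowerCentralSeries n = ⊥) :
    (⊤ : Subgroup G).lowerCentralSeries n = ⊥ := by
  rw [← Subgroup.map_eq_bot_iff_of_injective _ hf, Subgroup.map_lowerCentralSeries, ← le_bot_iff,
    ← hK]
  exact Subgroup.lowerCentralSeries_mono n le_top

theorem lowerCentralSeries_eq_bot_of_surjective (hf : Function.Surjective f)
    (hG : (⊤ : Subgroup G).lowerCentralSeries n = ⊥) :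
    (⊤ : Subgroup K).lowerCentralSeries n = ⊥ := by
  rw [← Subgroup.map_top_of_surjective f hf, ← Subgroup.map_lowerCentralSeries, hG,
    Subgroup.map_bot]

theorem derivedSeries_eq_bot_of_injective (hf : Function.Injective f)
    (hK : derivedSeries K n = ⊥) : derivedSeries G n = ⊥ := by
  rw [← Subgroup.map_eq_bot_iff_of_injective _ hf, ← le_bot_iff, ← hK]
  exact map_derivedSeries_le_derivedSeries f n

theorem derivedSeries_eq_bot_of_surjective (hf : Function.Surjective f)
    (hG : derivedSeries G n = ⊥) : derivedSeries K n = ⊥ := by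
  rw [← map_derivedSeries_eq hf, hG, Subgroup.map_bot]

end Subquotients

section NaturalConnection

open scoped commutatorElement

variable {M : Type*} [Monoid M] {d e f : M} {g h : Mˣ}

theorem mem_natconn : g ∈ natconn e ↔ e * (g : M) = e := Iff.rfl

theorem natconn_one : natconn (1 : M) = ⊥ := by
  ext g
  rw [mem_natconn, one_mul, Units.val_eq_one, Subgroup.mem_bot]

theorem natconn_zero {M : Type*} [MonoidWithZero M] : natconn (0 : M) = ⊤ :=
  eq_top_iff.2 fun g _ => zero_mul (g : M)

theorem mul_mem_Fef (he : IsIdempotentElem e) (hg : g ∈ natconn e) : f * (g : M) ∈ Fef e f :=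
  ⟨g, ⟨e, he, Eq.symm hg⟩, rfl⟩

theorem commutatorElement_mem_natconn_iff (hf : IsIdempotentElem f)
    (hcentral : CentralIn Set.univ f) :
    ⁅g, h⁆ ∈ natconn f ↔ Commute (f * (g : M)) (f * (h : M)) := by
  have mul_mul_mul_eq (x y : M) : f * x * (f * y) = f * (x * y) := by
    have hfx : Commute x f := (hcentral.2 x trivial).symm
    rw [hfx.mul_mul_mul_comm, hf.eq]
  have hcomm : ⁅g, h⁆ = g * h * (h * g)⁻¹ := by rw [commutatorElement_def, mul_inv_rev, mul_assoc]
  rw [mem_natconn, hcomm, Units.val_mul, ← mul_assoc, Units.mul_inv_eq_iff_eq_mul, commute_iff_eq,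
    mul_mul_mul_eq, mul_mul_mul_eq, Units.val_mul, Units.val_mul]

theorem commutator_natconn_le (hd : IsIdempotentElem d) (he : IsIdempotentElem e)
    (hf : IsIdempotentElem f) (hcentral : CentralIn Set.univ f)
    (hcomm : ∀ x ∈ Fef d f, ∀ y ∈ Fef e f, x * y = y * x) :
    ⁅natconn d, natconn e⁆ ≤ natconn f :=
  Subgroup.commutator_le.2 fun _ hg _ hh =>
    (commutatorElement_mem_natconn_iff hf hcentral).2 <|
      hcomm _ (mul_mem_Fef hd hg) _ (mul_mem_Fef he hh)

end NaturalConnection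

section Series

variable {M : Type*} [MonoidWithZero M] {n : ℕ} {c : ℕ → M}

theorem GNilpotentSeries.lowerCentralSeries_le_natconn (hc : GNilpotentSeries n c) :
    ∀ i ≤ n, (⊤ : Subgroup Mˣ).lowerCentralSeries i ≤ natconn (c i) := by
  obtain ⟨hzero, -, hidem, -, hfactor⟩ := hc
  intro i hi
  induction i with
  | zero => rw [hzero, natconn_zero]; exact le_top
  | succ i ih =>
    obtain ⟨hcidem, hcentral⟩ := hidem (i + 1) hi
    calc (⊤ : Subgroup Mˣ).lowerCentralSeries (i + 1)
        = ⁅(⊤ : Subgroup Mˣ).lowerCentralSeries i, ⊤⁆ := Subgroup.lowerCentralSeries_succ ..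
      _ ≤ ⁅natconn (c i), natconn 0⁆ :=
          Subgroup.commutator_mono (ih (by lia)) natconn_zero.ge
      _ ≤ natconn (c (i + 1)) :=
          commutator_natconn_le (hidem i (by lia)).1 .zero hcidem hcentral
            fun _ hx => (hfactor i hi hx).2

theorem GSolvableSeries.derivedSeries_le_natconn (hc : GSolvableSeries n c) :
    ∀ i ≤ n, derivedSeries Mˣ i ≤ natconn (c i) := by
  obtain ⟨hzero, -, hidem, -, hfactor⟩ := hc
  intro i hi
  induction i with
  | zero => rw [hzero, natconn_zero]; exact le_top
  | succ i ih =>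
    obtain ⟨hcidem, hcentral⟩ := hidem (i + 1) hi
    have hidem_i := (hidem i (by lia)).1
    calc derivedSeries Mˣ (i + 1)
        = ⁅derivedSeries Mˣ i, derivedSeries Mˣ i⁆ := derivedSeries_succ ..
      _ ≤ ⁅natconn (c i), natconn (c i)⁆ :=
          Subgroup.commutator_mono (ih (by lia)) (ih (by lia))
      _ ≤ natconn (c (i + 1)) :=
          commutator_natconn_le hidem_i hidem_i hcidem hcentral (hfactor i hi)

theorem GNilpotentSeries.lowerCentralSeries_units_eq_bot (hc : GNilpotentSeries n c) :
    (⊤ : Subgroup Mˣ).lowerCentralSeries n = ⊥ := by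
  rw [← le_bot_iff, ← natconn_one, ← hc.2.1]
  exact hc.lowerCentralSeries_le_natconn n le_rfl

theorem GSolvableSeries.derivedSeries_units_eq_bot (hc : GSolvableSeries n c) :
    derivedSeries Mˣ n = ⊥ := by
  rw [← le_bot_iff, ← natconn_one, ← hc.2.1]
  exact hc.derivedSeries_le_natconn n le_rfl

end Series

section Corner

variable {M : Type*} [Monoid M] {e : M}

/-- The local monoid `e * M * e` of a monoid at an idempotent `e`, with identity `e`. Its group of
units is the maximal subgroup of `M` with identity `e`. -/
instance cornerMonoid (he : IsIdempotentElem e) : Monoid he.Corner where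
  __ : Semigroup he.Corner := inferInstanceAs (Semigroup (Subsemigroup.corner e))
  one := ⟨e, e, by simp only [he.eq]⟩
  one_mul x := Subtype.ext ((Subsemigroup.mem_corner_iff he).1 x.2).1
  mul_one x := Subtype.ext ((Subsemigroup.mem_corner_iff he).1 x.2).2

theorem mem_centralizer_singleton {s : M} : s ∈ Submonoid.centralizer {e} ↔ Commute e s := by
  simp only [Submonoid.mem_centralizer_iff, Set.mem_singleton_iff, forall_eq, commute_iff_eq]

/-- Multiplication by an idempotent `e`, as a homomorphism from the centralizer of `e` to the local
monoid at `e`. -/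
def centralizerToCorner (he : IsIdempotentElem e) :
    Submonoid.centralizer ({e} : Set M) →* he.Corner where
  toFun s := ⟨e * s, (Subsemigroup.mem_corner_iff he).2 ⟨by rw [← mul_assoc, he.eq], by
    rw [mul_assoc, ← (mem_centralizer_singleton.1 s.2).eq, ← mul_assoc, he.eq]⟩⟩
  map_one' := Subtype.ext (mul_one e)
  map_mul' s t := Subtype.ext <| by
    have hes : Commute (s : M) e := (mem_centralizer_singleton.1 s.2).symm
    change e * (s * t) = e * s * (e * t)
    rw [hes.mul_mul_mul_comm, he.eq]

variable {H : Type*} [Group H]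

/-- A group mapped multiplicatively to a monoid lands in the units of the local monoid at the image
of its identity, which need not be the identity of the monoid. -/
def toUnitsCorner (φ : H →ₙ* M) : H →* (IsIdempotentElem.one.map φ).Cornerˣ :=
  MonoidHom.toHomUnits
    { toFun := fun a => ⟨φ a, φ a, by simp only [← map_mul, one_mul, mul_one]⟩
      map_one' := rfl
      map_mul' := fun a b => Subtype.ext (map_mul φ a b) }

theorem toUnitsCorner_injective {φ : H →ₙ* M} (hφ : Function.Injective φ) :
    Function.Injective (toUnitsCorner φ) :=
  fun _ _ hab => hφ (congrArg (fun u => (u.val.val : M)) hab)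

end Corner

namespace InverseMonoid

variable {S : Type*} [InverseMonoid S] {e f : S}

theorem inv_eq_self_of_isIdempotentElem (he : IsIdempotentElem e) : e⁻¹ = e :=
  (inv_unique e e (by rw [he.eq, he.eq]) (by rw [he.eq, he.eq])).symm

theorem isIdempotentElem_mul (he : IsIdempotentElem e) (hf : IsIdempotentElem f) :
    IsIdempotentElem (e * f) := by
  set x := (e * f)⁻¹
  have hef : e * f * x * (e * f) = e * f := mul_inv_mul (e * f)
  have hxx : x * (e * f) * x = x := inv_mul_inv (e * f)
  have hfxe_idem : IsIdempotentElem (f * x * e) := by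
    calc f * x * e * (f * x * e) = f * (x * (e * f) * x) * e := by simp only [mul_assoc]
      _ = f * x * e := by rw [hxx]
  have hfxe : f * x * e = x := by
    apply inv_unique
    · calc e * f * (f * x * e) * (e * f) = e * (f * f) * x * (e * e) * f := by
            simp only [mul_assoc]
        _ = e * f * x * (e * f) := by rw [he.eq, hf.eq]; simp only [mul_assoc]
        _ = e * f := hef
    · calc f * x * e * (e * f) * (f * x * e) = f * x * (e * e) * (f * f) * x * e := by
            simp only [mul_assoc]
        _ = f * (x * (e * f) * x) * e := by rw [he.eq, hf.eq]; simp only [mul_assoc]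
        _ = f * x * e := by rw [hxx]
  have hx_idem : IsIdempotentElem x := hfxe ▸ hfxe_idem
  have hef_eq : e * f = x :=
    (inv_unique x (e * f) hxx hef).trans (inv_eq_self_of_isIdempotentElem hx_idem)
  rwa [hef_eq]

theorem commute_of_isIdempotentElem (he : IsIdempotentElem e) (hf : IsIdempotentElem f) :
    Commute e f := by
  have mul_swap_mul {x y : S} (hx : IsIdempotentElem x) (hy : IsIdempotentElem y) :
      x * y * (y * x) * (x * y) = x * y := by
    calc x * y * (y * x) * (x * y) = x * (y * y) * (x * x) * y := by simp only [mul_assoc]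
      _ = x * y * (x * y) := by rw [hx.eq, hy.eq]; simp only [mul_assoc]
      _ = x * y := isIdempotentElem_mul hx hy
  have hfe : f * e = (e * f)⁻¹ := inv_unique _ _ (mul_swap_mul he hf) (mul_swap_mul hf he)
  rw [commute_iff_eq, hfe, inv_eq_self_of_isIdempotentElem (isIdempotentElem_mul he hf)]

theorem commute_unit_of_mul_mul_eq {g : Sˣ} (he : IsIdempotentElem e)
    (hg : e * (g : S) * e = e * g) (hg_inv : e * (↑g⁻¹ : S) * e = e * ↑g⁻¹) :
    Commute e (g : S) := by
  set q : S := ↑g⁻¹ * e * g with hq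
  have hq_idem : IsIdempotentElem q := by
    calc q * q = ↑g⁻¹ * (e * (g * ↑g⁻¹) * e) * g := by simp only [hq, mul_assoc]
      _ = q := by rw [Units.mul_inv, mul_one, he.eq]
  have he_mul_q : e * q = e := by
    rw [hq, ← mul_assoc, ← mul_assoc, hg_inv, Units.inv_mul_cancel_right]
  have hq_mul_e : q * e = q := by
    calc q * e = ↑g⁻¹ * (e * g * e) := by simp only [hq, mul_assoc]
      _ = q := by rw [hg, hq, mul_assoc]
  have hq_eq : q = e := by
    rw [← hq_mul_e, ← (commute_of_isIdempotentElem he hq_idem).eq, he_mul_q]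
  calc e * (g : S) = g * q := by rw [hq, mul_assoc, Units.mul_inv_cancel_left]
    _ = g * e := by rw [hq_eq]

end InverseMonoid

namespace Factorizable

variable {S : Type*} [InverseMonoid S] {e : S}

theorem exists_unit_commute_mul_eq (hS : Factorizable S) (he : IsIdempotentElem e) {s t : S}
    (hs : s ∈ Subsemigroup.corner e) (ht : t ∈ Subsemigroup.corner e)
    (hst : s * t = e) (hts : t * s = e) : ∃ g : Sˣ, Commute e (g : S) ∧ e * (g : S) = s := by
  obtain ⟨hes, hse⟩ := (Subsemigroup.mem_corner_iff he).1 hs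
  obtain ⟨-, hte⟩ := (Subsemigroup.mem_corner_iff he).1 ht
  obtain ⟨f, _, hf, ⟨g, rfl⟩, hfg⟩ := hS s
  have hfs : f * s = s := by rw [hfg, ← mul_assoc, hf.eq]
  have hsg : s * ↑g⁻¹ = f := by rw [hfg, Units.mul_inv_cancel_right]
  have hfe : f * e = e := by rw [← hst, ← mul_assoc, hfs]
  have hef : e * f = f := by rw [← hsg, ← mul_assoc, hes]
  have hfe_eq : f = e := by
    rw [← hef, (InverseMonoid.commute_of_isIdempotentElem he hf).eq, hfe]
  have heg : e * (g : S) = s := by rw [hfg, hfe_eq]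
  have heg_inv : e * (↑g⁻¹ : S) = t := by
    rw [← hts, ← heg, ← mul_assoc, hte, Units.mul_inv_cancel_right]
  exact ⟨g, InverseMonoid.commute_unit_of_mul_mul_eq he (by rw [heg, hse])
    (by rw [heg_inv, hte]), heg⟩

theorem map_centralizerToCorner_surjective (hS : Factorizable S) (he : IsIdempotentElem e) :
    Function.Surjective (Units.map (centralizerToCorner he)) := by
  intro x
  obtain ⟨g, hcomm, hg⟩ := hS.exists_unit_commute_mul_eq he x.val.2 x.inv.2
    (congrArg Subtype.val x.val_inv) (congrArg Subtype.val x.inv_val)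
  exact ⟨⟨⟨g, mem_centralizer_singleton.2 hcomm⟩,
    ⟨↑g⁻¹, mem_centralizer_singleton.2 hcomm.units_inv_right⟩,
    Subtype.ext g.mul_inv, Subtype.ext g.inv_mul⟩, Units.ext (Subtype.ext hg)⟩

variable {H : Type*} [Group H] {φ : H →ₙ* S} {n : ℕ}

theorem lowerCentralSeries_eq_bot (hS : Factorizable S) (hφ : Function.Injective φ)
    (hunits : (⊤ : Subgroup Sˣ).lowerCentralSeries n = ⊥) :
    (⊤ : Subgroup H).lowerCentralSeries n = ⊥ :=
  have he := IsIdempotentElem.one.map φ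
  lowerCentralSeries_eq_bot_of_injective (toUnitsCorner_injective hφ) <|
    lowerCentralSeries_eq_bot_of_surjective (hS.map_centralizerToCorner_surjective he) <|
      lowerCentralSeries_eq_bot_of_injective
        (Units.map_injective (f := Submonoid.subtype _) Subtype.val_injective) hunits

theorem derivedSeries_eq_bot (hS : Factorizable S) (hφ : Function.Injective φ)
    (hunits : derivedSeries Sˣ n = ⊥) : derivedSeries H n = ⊥ :=
  have he := IsIdempotentElem.one.map φ
  derivedSeries_eq_bot_of_injective (toUnitsCorner_injective hφ) <|
    derivedSeries_eq_bot_of_surjective (hS.map_centralizerToCorner_surjective he) <|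
      derivedSeries_eq_bot_of_injective
        (Units.map_injective (f := Submonoid.subtype _) Subtype.val_injective) hunits

end Factorizable

/-- The monoid with zero underlying an inverse monoid with zero. It is not an instance, as it would
give a second path to `Monoid S` besides `InverseMonoid.toMonoid`. -/
abbrev InverseMonoidWithZero.toMonoidWithZero {S : Type*} [InverseMonoidWithZero S] :
    MonoidWithZero S where
  zero_mul := InverseMonoidWithZero.zero_mul
  mul_zero := InverseMonoidWithZero.mul_zero

theorem stmt_15_general {S : Type*} [InverseMonoidWithZero S] (hfact : Factorizable S) {n : ℕ}
    {H : Type*} [Group H] {φ : H →ₙ* S} (hφ : Function.Injective φ) :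
    ((∃ c : ℕ → S, GNilpotentSeries n c) → Subgroup.upperCentralSeries H n = ⊤) ∧
    ((∃ c : ℕ → S, GSolvableSeries n c) → derivedSeries H n = ⊥) :=
  letI : MonoidWithZero S := InverseMonoidWithZero.toMonoidWithZero
  ⟨fun ⟨_, hc⟩ => Subgroup.lowerCentralSeries_eq_bot_iff_upperCentralSeries_eq_top.1 <|
      hfact.lowerCentralSeries_eq_bot hφ hc.lowerCentralSeries_units_eq_bot,
    fun ⟨_, hc⟩ => hfact.derivedSeries_eq_bot hφ hc.derivedSeries_units_eq_bot⟩

/-- If `S` is a `G`-nilpotent (resp. `G`-solvable) factorizable inverse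
monoid with zero of `G`-nilpotent (resp. `G`-solvable) length `n`, whose natural
connection is a dual isomorphism onto a sublattice of the lattice of subgroups of the
group of units, then every subgroup of `S` (i.e. every group embedded multiplicatively
in `S`) is nilpotent of class at most `n` (resp. solvable of derived length at most
`n`). -/
theorem stmt_15 {S : Type*} [InverseMonoidWithZero S] (hfact : Factorizable S)
    (hθ : NatconnDualIso S) (n : ℕ) :
    ((∃ c : ℕ → S, GNilpotentSeries n c) →
      (∀ (m : ℕ) (c : ℕ → S), GNilpotentSeries m c → n ≤ m) →
      ∀ (H : Type*) [Group H] (φ : H → S), Function.Injective φ →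
        (∀ a b : H, φ (a * b) = φ a * φ b) → upperCentralSeries H n = ⊤) ∧
    ((∃ c : ℕ → S, GSolvableSeries n c) →
      (∀ (m : ℕ) (c : ℕ → S), GSolvableSeries m c → n ≤ m) →
      ∀ (H : Type*) [Group H] (φ : H → S), Function.Injective φ →
        (∀ a b : H, φ (a * b) = φ a * φ b) → derivedSeries H n = ⊥) :=
  ⟨fun hseries _ _ _ φ hφ hmul => (stmt_15_general hfact (φ := ⟨φ, hmul⟩) hφ).1 hseries,
    fun hseries _ _ _ φ hφ hmul => (stmt_15_general hfact (φ := ⟨φ, hmul⟩) hφ).2 hseries⟩
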